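/- (Cyclicity of the Carathéodory example) For ρ, δ > 0, with α = 1/(2+δ) and γ = ρ^{−α}, the moments a_n = ∫_0^∞ x^n e^{−γ x^α} dx satisfy: for every t ∈ (−1, 1), a_n = ∫_0^∞ x^n (1 + t·sin(γ x^α tan(πα))) e^{−γ x^α} dx for all n ≥ 0. In particular the Stieltjes moment problem for (a_n) is indeterminate. -/

import Mathlib

open MeasureTheory

/-!
Substituting `u = x ^ α` turns `∫ x in Ioi 0, x ^ n * g (x ^ α) * exp (-γ * x ^ α)` into a multiple
of the mean of `g` under the gamma distribution of shape `a = (n + 1) / α` and rate `γ`. The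
characteristic function of that distribution is `t ↦ (1 - i t / γ) ^ (-a)`; at `t = γ tan θ` it
equals `(cos θ) ^ a * exp (i a θ)`, so the mean of `sin (γ u tan θ)` is `(cos θ) ^ a * sin (a θ)`.
For `θ = π α` the angle `a θ` is `(n + 1) π`, and all moments of the perturbation vanish. The
restriction `α < 1 / 2` is what puts `π α` into the range `|θ| < π / 2` of the principal branch.
-/

section IdentityTheorem

open Filter Topology

theorem eqOn_of_analyticOnNhd_of_eventually_eq_ofReal {E : Type*} [NormedAddCommGroup E]
    [NormedSpace ℂ E] {f g : ℂ → E} {U : Set ℂ} {x : ℝ} (hf : AnalyticOnNhd ℂ f U)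
    (hg : AnalyticOnNhd ℂ g U) (hU : IsPreconnected U) (hx : (x : ℂ) ∈ U)
    (hfg : ∀ᶠ y : ℝ in 𝓝 x, f y = g y) : Set.EqOn f g U := by
  have hofReal : Tendsto ((↑) : ℝ → ℂ) (𝓝[≠] x) (𝓝[≠] (x : ℂ)) :=
    Complex.continuous_ofReal.continuousWithinAt.tendsto_nhdsWithin fun y hy => by simpa using hy
  exact hf.eqOn_of_preconnected_of_frequently_eq hg hU hx <|
    hofReal.frequently (hfg.filter_mono nhdsWithin_le_nhds).frequently

end IdentityTheorem

section GammaDistribution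

open ProbabilityTheory Set

variable {E : Type*} [NormedAddCommGroup E] [NormedSpace ℝ E] {a r : ℝ}

theorem integral_gammaMeasure (ha : 0 < a) (hr : 0 < r) (g : ℝ → E) :
    ∫ x, g x ∂gammaMeasure a r =
      (r ^ a / Real.Gamma a) • ∫ x in Ioi 0, (x ^ (a - 1) * Real.exp (-(r * x))) • g x := by
  have hpdf : (fun x => (gammaPDF a r x).toReal • g x) =
      indicator (Ici 0) fun x =>
        (r ^ a / Real.Gamma a) • (x ^ (a - 1) * Real.exp (-(r * x))) • g x := by
    ext x
    rw [gammaPDF, ENNReal.toReal_ofReal (gammaPDFReal_nonneg ha hr x)]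
    by_cases hx : 0 ≤ x <;> simp [gammaPDFReal, hx, smul_smul, mul_assoc]
  have hmeas : Measurable (gammaPDF a r) := (measurable_gammaPDFReal a r).ennreal_ofReal
  have hfin : ∀ᵐ x, gammaPDF a r x < ⊤ := ae_of_all _ fun _ => ENNReal.ofReal_lt_top
  rw [gammaMeasure, integral_withDensity_eq_integral_toReal_smul hmeas hfin, hpdf,
    integral_indicator measurableSet_Ici, integral_Ici_eq_integral_Ioi, integral_smul]

theorem integral_rpow_mul_exp_neg_mul_rpow_smul_comp_rpow {p q : ℝ} (hp : 0 < p) (hq : -1 < q)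
    (hr : 0 < r) (g : ℝ → E) :
    ∫ x in Ioi 0, (x ^ q * Real.exp (-r * x ^ p)) • g (x ^ p) =
      (Real.Gamma ((q + 1) / p) / (p * r ^ ((q + 1) / p))) •
        ∫ x, g x ∂gammaMeasure ((q + 1) / p) r := by
  have ha : 0 < (q + 1) / p := div_pos (by linarith) hp
  have := Real.Gamma_pos_of_pos ha
  rw [integral_gammaMeasure ha hr, ← integral_comp_rpow_Ioi_of_pos
    (g := fun u => (u ^ ((q + 1) / p - 1) * Real.exp (-(r * u))) • g u) hp, smul_smul,
    ← integral_smul]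
  refine setIntegral_congr_fun measurableSet_Ioi fun x (hx : 0 < x) => ?_
  have hpow : x ^ (p - 1) * (x ^ p) ^ ((q + 1) / p - 1) = x ^ q := by
    rw [← Real.rpow_mul hx.le, ← Real.rpow_add hx]
    congr 1
    field_simp
    ring
  simp only [smul_smul]
  congr 1
  rw [← hpow]
  field_simp

theorem mgf_id_gammaMeasure (ha : 0 < a) (hr : 0 < r) {t : ℝ} (ht : t < r) :
    mgf id (gammaMeasure a r) t = (1 - t / r) ^ (-a) := by
  have hrt : 0 < r - t := sub_pos.mpr ht
  have := Real.Gamma_pos_of_pos ha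
  calc mgf id (gammaMeasure a r) t
      = r ^ a / Real.Gamma a * ∫ x in Ioi 0, x ^ (a - 1) * Real.exp (-((r - t) * x)) := by
        rw [mgf, integral_gammaMeasure ha hr]
        simp only [smul_eq_mul, mul_assoc, ← Real.exp_add, id]
        congr! 5
        ring
    _ = (r / (r - t)) ^ a := by
        rw [Real.integral_rpow_mul_exp_neg_mul_Ioi ha hrt, Real.div_rpow hr.le hrt.le,
          Real.div_rpow zero_le_one hrt.le, Real.one_rpow]
        field_simp
    _ = (1 - t / r) ^ (-a) := by
        rw [one_sub_div hr.ne', Real.rpow_neg (by positivity), ← Real.inv_rpow (by positivity),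
          inv_div]

theorem Iio_subset_integrableExpSet_id_gammaMeasure (ha : 0 < a) (hr : 0 < r) :
    Iio r ⊆ integrableExpSet id (gammaMeasure a r) := fun t (ht : t < r) => by
  have := isProbabilityMeasure_gammaMeasure ha hr
  have hpos : 0 < 1 - t / r := by rwa [sub_pos, div_lt_one hr]
  refine mgf_pos_iff.mp ?_
  rw [mgf_id_gammaMeasure ha hr ht]
  positivity

theorem complexMGF_id_gammaMeasure (ha : 0 < a) (hr : 0 < r) {z : ℂ} (hz : z.re < r) :
    complexMGF id (gammaMeasure a r) z = (1 - z / r) ^ (-a : ℂ) := by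
  have hmgf : AnalyticOnNhd ℂ (complexMGF id (gammaMeasure a r)) {z | z.re < r} := fun w hw =>
    analyticAt_complexMGF <| interior_maximal
      (Iio_subset_integrableExpSet_id_gammaMeasure ha hr) isOpen_Iio hw
  have hcpow : AnalyticOnNhd ℂ (fun z : ℂ => (1 - z / r) ^ (-a : ℂ)) {z | z.re < r} :=
    fun w (hw : w.re < r) => by
      refine AnalyticAt.cpow (by fun_prop) (by fun_prop) (.inl ?_)
      rwa [Complex.sub_re, Complex.one_re, Complex.div_ofReal_re, sub_pos, div_lt_one hr]
  refine eqOn_of_analyticOnNhd_of_eventually_eq_ofReal hmgf hcpow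
    (convex_halfSpace_re_lt r).isPreconnected (x := 0) (by simpa using hr) ?_ hz
  filter_upwards [Iio_mem_nhds hr] with t (ht : t < r)
  have hpos : 0 ≤ 1 - t / r := by rw [sub_nonneg, div_le_one hr]; exact ht.le
  rw [complexMGF_ofReal, mgf_id_gammaMeasure ha hr ht, Complex.ofReal_cpow hpos]
  push_cast
  rfl

theorem charFun_gammaMeasure (ha : 0 < a) (hr : 0 < r) (t : ℝ) :
    charFun (gammaMeasure a r) t = (1 - t * Complex.I / r) ^ (-a : ℂ) := by
  rw [← complexMGF_id_mul_I, complexMGF_id_gammaMeasure ha hr (by simpa using hr)]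

theorem im_charFun_eq_integral_sin (μ : Measure ℝ) [IsFiniteMeasure μ] (t : ℝ) :
    (charFun μ t).im = ∫ x, Real.sin (t * x) ∂μ := by
  have hint : Integrable (fun x : ℝ => Complex.exp (t * x * Complex.I)) μ :=
    .of_bound (by fun_prop) 1 <| ae_of_all _ fun x => by
      rw [← Complex.ofReal_mul, Complex.norm_exp_ofReal_mul_I]
  rw [charFun_apply_real]
  refine (integral_im hint).symm.trans (integral_congr_ae <| ae_of_all _ fun x => ?_)
  simp only [← Complex.ofReal_mul]
  exact Complex.exp_ofReal_mul_I_im _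

theorem im_one_sub_tan_mul_I_cpow_neg {θ : ℝ} (hθ : |θ| < Real.pi / 2) (a : ℝ) :
    ((1 - Real.tan θ * Complex.I) ^ (-a : ℂ)).im = Real.cos θ ^ a * Real.sin (a * θ) := by
  obtain ⟨hθ₁, hθ₂⟩ := abs_lt.mp hθ
  have hcos : 0 < Real.cos θ := Real.cos_pos_of_mem_Ioo ⟨hθ₁, hθ₂⟩
  have hpolar : 1 - Real.tan θ * Complex.I = ((Real.cos θ)⁻¹ : ℝ) *
      (Complex.cos (-θ : ℝ) + Complex.sin (-θ : ℝ) * Complex.I) := by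
    have hcos' : Complex.cos θ ≠ 0 := by exact_mod_cast hcos.ne'
    push_cast
    rw [Complex.tan_eq_sin_div_cos, Complex.cos_neg, Complex.sin_neg]
    field_simp
    ring
  rw [← Complex.ofReal_neg, Complex.cpow_ofReal_im, hpolar,
    Complex.arg_mul_cos_add_sin_mul_I (inv_pos.mpr hcos) ⟨by linarith, by linarith⟩, norm_mul,
    Complex.norm_cos_add_sin_mul_I, mul_one, Complex.norm_of_nonneg (inv_pos.mpr hcos).le,
    Real.inv_rpow hcos.le, Real.rpow_neg hcos.le, inv_inv]
  ring_nf

theorem integral_sin_mul_tan_gammaMeasure (ha : 0 < a) (hr : 0 < r) {θ : ℝ}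
    (hθ : |θ| < Real.pi / 2) :
    ∫ x, Real.sin (r * x * Real.tan θ) ∂gammaMeasure a r = Real.cos θ ^ a * Real.sin (a * θ) := by
  have := isProbabilityMeasure_gammaMeasure ha hr
  have hr' : (r : ℂ) ≠ 0 := by exact_mod_cast hr.ne'
  calc ∫ x, Real.sin (r * x * Real.tan θ) ∂gammaMeasure a r
      = (charFun (gammaMeasure a r) (r * Real.tan θ)).im := by
        simp only [im_charFun_eq_integral_sin, mul_right_comm]
    _ = ((1 - Real.tan θ * Complex.I) ^ (-a : ℂ)).im := by
        rw [charFun_gammaMeasure ha hr, Complex.ofReal_mul, mul_assoc, mul_div_cancel_left₀ _ hr']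
    _ = Real.cos θ ^ a * Real.sin (a * θ) := im_one_sub_tan_mul_I_cpow_neg hθ a

end GammaDistribution

section VanishingMoments

open Set

variable {α γ : ℝ}

theorem integral_pow_mul_sin_mul_exp_eq_zero (hα : 0 < α) (hα' : α < 1 / 2) (hγ : 0 < γ) (n : ℕ) :
    ∫ x in Ioi (0 : ℝ), x ^ n *
      (Real.sin (γ * x ^ α * Real.tan (Real.pi * α)) * Real.exp (-γ * x ^ α)) = 0 := by
  have hn : (-1 : ℝ) < n := neg_one_lt_zero.trans_le n.cast_nonneg
  have hθ : |Real.pi * α| < Real.pi / 2 := by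
    rw [abs_of_pos (by positivity)]
    nlinarith [Real.pi_pos]
  have hangle : (n + 1) / α * (Real.pi * α) = (n + 1 : ℕ) * Real.pi := by
    push_cast
    field_simp
  have hgamma := integral_rpow_mul_exp_neg_mul_rpow_smul_comp_rpow hα hn hγ
    fun u => Real.sin (γ * u * Real.tan (Real.pi * α))
  rw [integral_sin_mul_tan_gammaMeasure (div_pos (by linarith) hα) hγ hθ, hangle,
    Real.sin_nat_mul_pi, mul_zero, smul_zero] at hgamma
  simpa only [Real.rpow_natCast, smul_eq_mul, mul_assoc, mul_comm (Real.exp _)] using hgamma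

theorem integrableOn_pow_mul_exp_neg_mul_rpow (hα : 0 < α) (hγ : 0 < γ) (n : ℕ) :
    IntegrableOn (fun x : ℝ => x ^ n * Real.exp (-γ * x ^ α)) (Ioi 0) := by
  simpa only [Real.rpow_natCast] using integrableOn_rpow_mul_exp_neg_mul_rpow
    (neg_one_lt_zero.trans_le (n.cast_nonneg (α := ℝ))) hα hγ

end VanishingMoments

section StieltjesClass

open Set

theorem one_add_mul_nonneg_of_abs_le_one {s t : ℝ} (hs : |s| ≤ 1) (ht : |t| ≤ 1) :
    0 ≤ 1 + s * t := by
  have hst : |s * t| ≤ 1 := abs_mul s t ▸ mul_le_one₀ hs (abs_nonneg t) ht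
  linarith [neg_abs_le (s * t)]

theorem integral_mul_one_add_mul_mul {Ω : Type*} {_ : MeasurableSpace Ω} {μ : Measure Ω}
    {f h w : Ω → ℝ} {c : ℝ} (hfw : Integrable (fun x => f x * w x) μ)
    (hh : AEStronglyMeasurable h μ) (hc : ∀ᵐ x ∂μ, ‖h x‖ ≤ c)
    (hperp : ∫ x, f x * (h x * w x) ∂μ = 0) (t : ℝ) :
    ∫ x, f x * (1 + t * h x) * w x ∂μ = ∫ x, f x * w x ∂μ := by
  have hfhw : Integrable (fun x => f x * (h x * w x)) μ := by
    simpa only [mul_left_comm] using hfw.bdd_mul hh hc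
  calc ∫ x, f x * (1 + t * h x) * w x ∂μ
      = ∫ x, (f x * w x + t * (f x * (h x * w x))) ∂μ := by congr! 2; ring
    _ = ∫ x, f x * w x ∂μ := by
        rw [integral_add hfw (hfhw.const_mul t), integral_const_mul, hperp, mul_zero, add_zero]

/-- The member with parameter `t` of the Stieltjes class with centre `w` and perturbation `h`: the
measure on the half-line `(0, ∞)` with density `(1 + t * h) * w`. When `|h| ≤ 1` and every
`x ^ n * h x * w x` has integral zero, the members with `|t| ≤ 1` all have the moments of `w`.
The density is truncated at `0` where it is negative. -/
noncomputable def stieltjesClass (w h : ℝ → ℝ) (t : ℝ) : Measure ℝ :=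
  (volume.restrict (Ioi 0)).withDensity fun x => ENNReal.ofReal ((1 + t * h x) * w x)

namespace stieltjesClass

variable {w h : ℝ → ℝ} {t : ℝ}

theorem apply_Iio_zero (w h : ℝ → ℝ) (t : ℝ) : stieltjesClass w h t (Iio 0) = 0 := by
  refine withDensity_absolutelyContinuous _ _ ?_
  rw [Measure.restrict_apply measurableSet_Iio,
    (Iio_disjoint_Ioi_same (a := (0 : ℝ))).inter_eq, measure_empty]

theorem integral_eq (hw : AEMeasurable w (volume.restrict (Ioi 0)))
    (hh : AEMeasurable h (volume.restrict (Ioi 0))) (hw₀ : ∀ x > 0, 0 ≤ w x)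
    (hh₁ : ∀ x > 0, |h x| ≤ 1) (ht : |t| ≤ 1) (f : ℝ → ℝ) :
    ∫ x, f x ∂stieltjesClass w h t = ∫ x in Ioi 0, f x * (1 + t * h x) * w x := by
  rw [stieltjesClass, integral_withDensity_eq_integral_toReal_smul₀ (by fun_prop)
    (ae_of_all _ fun _ => ENNReal.ofReal_lt_top)]
  refine setIntegral_congr_fun measurableSet_Ioi fun x hx => ?_
  simp only [smul_eq_mul]
  rw [ENNReal.toReal_ofReal <|
    mul_nonneg (one_add_mul_nonneg_of_abs_le_one ht (hh₁ x hx)) (hw₀ x hx)]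
  ring

theorem injOn (hw : ContinuousOn w (Ioi 0)) (hh : ContinuousOn h (Ioi 0)) {x₀ : ℝ} (hx₀ : 0 < x₀)
    (hwx₀ : 0 < w x₀) (hhx₀ : h x₀ ≠ 0) (hhx₀' : |h x₀| ≤ 1) :
    InjOn (stieltjesClass w h) (Icc (-1) 1) := by
  intro s hs t ht hst
  have hcont (t : ℝ) :
      ContinuousOn (fun x => ENNReal.ofReal ((1 + t * h x) * w x)) (Ioi 0) :=
    ENNReal.continuous_ofReal.comp_continuousOn (by fun_prop)
  have hmeas (t : ℝ) := (hcont t).aemeasurable (μ := volume) measurableSet_Ioi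
  have hdensity := Measure.eqOn_open_of_ae_eq
    ((withDensity_eq_iff_of_sigmaFinite (hmeas s) (hmeas t)).mp hst) isOpen_Ioi (hcont s) (hcont t)
  have hnonneg {t : ℝ} (ht : t ∈ Icc (-1) 1) : 0 ≤ (1 + t * h x₀) * w x₀ :=
    mul_nonneg (one_add_mul_nonneg_of_abs_le_one (abs_le.mpr ht) hhx₀') hwx₀.le
  have heq := (ENNReal.ofReal_eq_ofReal_iff (hnonneg hs) (hnonneg ht)).mp (hdensity hx₀)
  exact mul_right_cancel₀ hhx₀ (add_left_cancel (mul_right_cancel₀ hwx₀.ne' heq))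

end stieltjesClass

end StieltjesClass

section Caratheodory

variable {α γ : ℝ}

theorem integral_pow_mul_one_add_mul_sin_mul_exp (hα : 0 < α) (hα' : α < 1 / 2) (hγ : 0 < γ)
    (t : ℝ) (n : ℕ) :
    ∫ x in Set.Ioi (0 : ℝ), x ^ n * (1 + t * Real.sin (γ * x ^ α * Real.tan (Real.pi * α))) *
        Real.exp (-γ * x ^ α) =
      ∫ x in Set.Ioi (0 : ℝ), x ^ n * Real.exp (-γ * x ^ α) :=
  integral_mul_one_add_mul_mul (integrableOn_pow_mul_exp_neg_mul_rpow hα hγ n) (by fun_prop)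
    (ae_of_all _ fun _ => Real.abs_sin_le_one _)
    (integral_pow_mul_sin_mul_exp_eq_zero hα hα' hγ n) t

theorem exists_sin_mul_rpow_mul_tan_eq_one (hα : 0 < α) (hα' : α < 1 / 2) (hγ : 0 < γ) :
    ∃ x > 0, Real.sin (γ * x ^ α * Real.tan (Real.pi * α)) = 1 := by
  have htan : 0 < Real.tan (Real.pi * α) :=
    Real.tan_pos_of_pos_of_lt_pi_div_two (by positivity) (by nlinarith [Real.pi_pos])
  refine ⟨(Real.pi / 2 / (γ * Real.tan (Real.pi * α))) ^ α⁻¹, by positivity, ?_⟩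
  rw [Real.rpow_inv_rpow (by positivity) hα.ne', ← Real.sin_pi_div_two]
  congr 1
  field_simp

theorem stmt_12_general (hα : 0 < α) (hα' : α < 1 / 2) (hγ : 0 < γ) :
    (∀ t : ℝ, ∀ n : ℕ,
      (∫ x in Set.Ioi (0 : ℝ), x ^ n * Real.exp (-γ * x ^ α)) =
      ∫ x in Set.Ioi (0 : ℝ),
        x ^ n * (1 + t * Real.sin (γ * x ^ α * Real.tan (Real.pi * α))) *
          Real.exp (-γ * x ^ α)) ∧
    ∃ μ ν : Measure ℝ, μ ≠ ν ∧ μ (Set.Iio 0) = 0 ∧ ν (Set.Iio 0) = 0 ∧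
      (∀ n : ℕ, (∫ x, x ^ n ∂μ) = ∫ x in Set.Ioi (0 : ℝ), x ^ n * Real.exp (-γ * x ^ α)) ∧
      (∀ n : ℕ, (∫ x, x ^ n ∂ν) = ∫ x in Set.Ioi (0 : ℝ), x ^ n * Real.exp (-γ * x ^ α)) := by
  have hmoment := integral_pow_mul_one_add_mul_sin_mul_exp hα hα' hγ
  let μ := stieltjesClass (fun x => Real.exp (-γ * x ^ α))
    fun x => Real.sin (γ * x ^ α * Real.tan (Real.pi * α))
  have hμ_moment {t : ℝ} (ht : |t| ≤ 1) (n : ℕ) :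
      ∫ x, x ^ n ∂μ t = ∫ x in Set.Ioi (0 : ℝ), x ^ n * Real.exp (-γ * x ^ α) :=
    (stieltjesClass.integral_eq (by fun_prop) (by fun_prop) (fun _ _ => (Real.exp_pos _).le)
      (fun _ _ => Real.abs_sin_le_one _) ht _).trans (hmoment t n)
  have hμ_injOn : Set.InjOn μ (Set.Icc (-1) 1) := by
    obtain ⟨x₀, hx₀, hsin⟩ := exists_sin_mul_rpow_mul_tan_eq_one hα hα' hγ
    have hrpow : Continuous fun x : ℝ => x ^ α := Real.continuous_rpow_const hα.le
    exact stieltjesClass.injOn (by fun_prop) (by fun_prop) hx₀ (Real.exp_pos _)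
      (hsin ▸ one_ne_zero) (Real.abs_sin_le_one _)
  exact ⟨fun t n => (hmoment t n).symm, μ 0, μ 1,
    hμ_injOn.ne (by norm_num) (by norm_num) zero_ne_one,
    stieltjesClass.apply_Iio_zero .., stieltjesClass.apply_Iio_zero ..,
    hμ_moment (by norm_num), hμ_moment (by norm_num)⟩

end Caratheodory

theorem stmt_12 (ρ δ α γ : ℝ) (hρ : 0 < ρ) (hδ : 0 < δ)
    (hα : α = 1 / (2 + δ)) (hγ : γ = ρ ^ (-α)) :
    (∀ t ∈ Set.Ioo (-1 : ℝ) 1, ∀ n : ℕ,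
      (∫ x in Set.Ioi (0 : ℝ), x ^ n * Real.exp (-γ * x ^ α)) =
      ∫ x in Set.Ioi (0 : ℝ),
        x ^ n * (1 + t * Real.sin (γ * x ^ α * Real.tan (Real.pi * α))) *
          Real.exp (-γ * x ^ α)) ∧
    ∃ μ ν : Measure ℝ, μ ≠ ν ∧ μ (Set.Iio 0) = 0 ∧ ν (Set.Iio 0) = 0 ∧
      (∀ n : ℕ, (∫ x, x ^ n ∂μ) = ∫ x in Set.Ioi (0 : ℝ), x ^ n * Real.exp (-γ * x ^ α)) ∧
      (∀ n : ℕ, (∫ x, x ^ n ∂ν) = ∫ x in Set.Ioi (0 : ℝ), x ^ n * Real.exp (-γ * x ^ α)) := by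
  have hα' : α < 1 / 2 := hα ▸ one_div_lt_one_div_of_lt two_pos (by linarith)
  exact (stmt_12_general (hα ▸ by positivity) hα' (hγ ▸ by positivity)).imp_left
    fun hmoment t _ => hmoment t
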